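/- arXiv:2206.07356 — 2 statements merged into one kernel-verified Lean document; each statement's English description precedes it below -/
import Mathlib

section
/- One-step expectation bound for Quantile-RaSK with exact step in the corrupted (noiseless) case (Theorem 3.3(b)): under the same setup and hypotheses as Theorem 3.3(a) — A full rank with unit-norm rows, b = A x̂ + b^c with exactly βm corruptions, β < q < 1 − β, the condition (2q/(q−β))·(2√β/√(1−q−β) + β/(1−q−β))·((|x̂|_min + 2λ)/|x̂|_min) < σ̃_{q−β,min}(A)²/σ_max(A)², x with x* ∈ ∂f(x) ∩ Range(Aᵀ), Q the q-quantile of residuals, N₂ = {i : |⟨a_i, x⟩ − b_i| ≤ Q} with |N₂| = qm — define for i ∈ N₂: t_i a minimizer of t ↦ f*(x* − t·a_i) + t·b_i, x_i'* = x* − t_i·a_i, and x_i' with x_i'* ∈ ∂f(x_i'). Then (1/(qm))·Σ_{i ∈ N₂} D_f^{x_i'*}(x_i', x̂) ≤ (1 − C)·D_f^{x*}(x, x̂) + (2λ/(qm))·‖b − A x̂‖·‖A‖_{1,2}, where C = ((q−β)/(2q²m))·(|x̂|_min/(|x̂|_min + 2λ))·σ̃_{q−β,min}(A)² − (1/(qm))·(2√β/√(1−q−β)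 + β/(1−q−β))·σ_max(A)² and ‖A‖_{1,2} = (Σ_{i=1}^m ‖a_i‖₁²)^{1/2}. -/
/-- Euclidean inner product on finite-dimensional real coordinate space. -/
noncomputable def ip {I : Type*} [Fintype I] (u v : I → ℝ) : ℝ := ∑ i, u i * v i

/-- Euclidean norm. -/
noncomputable def enorm2 {I : Type*} [Fintype I] (v : I → ℝ) : ℝ :=
  Real.sqrt (∑ i, (v i) ^ 2)

/-- ℓ₁ norm. -/
noncomputable def norm1 {I : Type*} [Fintype I] (v : I → ℝ) : ℝ := ∑ i, |v i|

/-- ℓ∞ norm. -/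
noncomputable def normInf {I : Type*} [Fintype I] (v : I → ℝ) : ℝ := ⨆ i, |v i|

/-- Subdifferential of a convex function. -/
def subdiff {I : Type*} [Fintype I] (f : (I → ℝ) → ℝ) (x : I → ℝ) : Set (I → ℝ) :=
  {g | ∀ y, f y ≥ f x + ip g (y - x)}

/-- Bregman distance `D_f^{g}(x, y)` with respect to `f` and subgradient `g ∈ ∂f(x)`. -/
noncomputable def breg {I : Type*} [Fintype I] (f : (I → ℝ) → ℝ) (g x y : I → ℝ) : ℝ :=
  f y - f x - ip g (y - x)

/-- Fenchel conjugate. -/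
noncomputable def fconj {I : Type*} [Fintype I] (f : (I → ℝ) → ℝ) (u : I → ℝ) : ℝ :=
  ⨆ z, (ip u z - f z)

/-- Soft shrinkage (soft thresholding) operator. -/
noncomputable def softShrink {I : Type*} [Fintype I] (lam : ℝ) (x : I → ℝ) : I → ℝ :=
  fun i => Real.sign (x i) * max (|x i| - lam) 0

/-- Smallest singular value `σ_min(M) = inf_{x ≠ 0} ‖Mx‖/‖x‖`. -/
noncomputable def sigmaMin {I J : Type*} [Fintype I] [Fintype J] (M : Matrix I J ℝ) : ℝ :=
  sInf {r | ∃ x : J → ℝ, x ≠ 0 ∧ r = enorm2 (M.mulVec x) / enorm2 x}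

/-- Largest singular value `σ_max(M) = sup_{x ≠ 0} ‖Mx‖/‖x‖`. -/
noncomputable def sigmaMax {I J : Type*} [Fintype I] [Fintype J] (M : Matrix I J ℝ) : ℝ :=
  sSup {r | ∃ x : J → ℝ, x ≠ 0 ∧ r = enorm2 (M.mulVec x) / enorm2 x}

/-- Frobenius norm. -/
noncomputable def frobNorm {I J : Type*} [Fintype I] [Fintype J] (M : Matrix I J ℝ) : ℝ :=
  Real.sqrt (∑ i, ∑ j, (M i j) ^ 2)

/-- `‖A‖_{1,2} = sqrt (∑ i ‖a_i‖₁²)` where `a_iᵀ` are the rows of `A`. -/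
noncomputable def norm12 {m n : ℕ} (A : Matrix (Fin m) (Fin n) ℝ) : ℝ :=
  Real.sqrt (∑ i, (norm1 (A i)) ^ 2)

/-- Column submatrix `A_J`. -/
noncomputable def colSub {m n : ℕ} (A : Matrix (Fin m) (Fin n) ℝ) (J : Finset (Fin n)) :
    Matrix (Fin m) {j // j ∈ J} ℝ := A.submatrix id Subtype.val

/-- Row submatrix `A_I`. -/
noncomputable def rowSub {m n : ℕ} (A : Matrix (Fin m) (Fin n) ℝ) (I : Finset (Fin m)) :
    Matrix {i // i ∈ I} (Fin n) ℝ := A.submatrix Subtype.val id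

/-- Submatrix `A_{I,J}` with rows in `I` and columns in `J`. -/
noncomputable def subMat {m n : ℕ} (A : Matrix (Fin m) (Fin n) ℝ)
    (I : Finset (Fin m)) (J : Finset (Fin n)) :
    Matrix {i // i ∈ I} {j // j ∈ J} ℝ := A.submatrix Subtype.val Subtype.val

/-- `σ̃_min(A) = min{σ_min(A_J) : J ⊆ {1,…,n}, A_J ≠ 0}`. -/
noncomputable def sigmaTildeMin {m n : ℕ} (A : Matrix (Fin m) (Fin n) ℝ) : ℝ :=
  sInf {r | ∃ J : Finset (Fin n), colSub A J ≠ 0 ∧ r = sigmaMin (colSub A J)}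

/-- `σ̃_{q−β,min}(A)` (with `k = (q−β)m`): min of `σ_min(A_{I,J})` over `|I| = k` and
`J` nonempty. -/
noncomputable def sigmaTildeQBMin {m n : ℕ} (A : Matrix (Fin m) (Fin n) ℝ) (k : ℕ) : ℝ :=
  sInf {r | ∃ (I : Finset (Fin m)) (J : Finset (Fin n)),
    I.card = k ∧ J.Nonempty ∧ r = sigmaMin (subMat A I J)}

/-- Variant of `σ̃_{q−β,min}(A)` requiring moreover `A_J ≠ 0`. -/
noncomputable def sigmaTildeQBMin' {m n : ℕ} (A : Matrix (Fin m) (Fin n) ℝ) (k : ℕ) : ℝ :=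
  sInf {r | ∃ (I : Finset (Fin m)) (J : Finset (Fin n)),
    I.card = k ∧ J.Nonempty ∧ colSub A J ≠ 0 ∧ r = sigmaMin (subMat A I J)}

/-- `σ_{q−β,min}(A)` (with `k = (q−β)m`): min of `σ_min(A_I)` over `|I| = k`. -/
noncomputable def sigmaQBMin {m n : ℕ} (A : Matrix (Fin m) (Fin n) ℝ) (k : ℕ) : ℝ :=
  sInf {r | ∃ I : Finset (Fin m), I.card = k ∧ r = sigmaMin (rowSub A I)}

/-- The increasingly sorted rearrangement `y_(1) ≤ … ≤ y_(m)` of a finite tuple. -/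
noncomputable def sortedVal {m : ℕ} (y : Fin m → ℝ) : Fin m → ℝ := y ∘ Tuple.sort y

/-- The `q`-quantile of `y_1, …, y_m` in the case where `qm = k` is an integer:
`(y_(k) + y_(k+1))/2` (1-indexed). -/
noncomputable def quantileAt {m : ℕ} (k : ℕ) (y : Fin m → ℝ) : ℝ :=
  if h : 0 < k ∧ k < m then
    (sortedVal y ⟨k - 1, by omega⟩ + sortedVal y ⟨k, h.2⟩) / 2
  else 0

/-- `|x̂|_min = min{|x̂_j| : x̂_j ≠ 0}`. -/
noncomputable def xminOf {n : ℕ} (xhat : Fin n → ℝ) : ℝ :=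
  sInf {r | ∃ j, xhat j ≠ 0 ∧ r = |xhat j|}

lemma enorm2_sq' {I : Type*} [Fintype I] (v : I → ℝ) : enorm2 v ^ 2 = ∑ i, (v i) ^ 2 :=
  Real.sq_sqrt (Finset.sum_nonneg fun i _ => sq_nonneg _)

lemma enorm2_nonneg' {I : Type*} [Fintype I] (v : I → ℝ) : 0 ≤ enorm2 v := Real.sqrt_nonneg _

lemma enorm2_pos' {I : Type*} [Fintype I] (v : I → ℝ) (hv : v ≠ 0) : 0 < enorm2 v := by
  obtain ⟨j, hj⟩ := Function.ne_iff.mp hv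
  apply Real.sqrt_pos.mpr
  apply Finset.sum_pos' (fun i _ => sq_nonneg _)
  exact ⟨j, Finset.mem_univ _, by have : v j ≠ 0 := hj
                                  positivity⟩

/-- Scalar subgradient inequality. -/
lemma subdiff_scalar {n : ℕ} (lam : ℝ) (hlam : 0 < lam) (x u : Fin n → ℝ)
    (hu : u ∈ subdiff (fun x : Fin n → ℝ => lam * norm1 x + (1 / 2) * enorm2 x ^ 2) x)
    (j : Fin n) (y : ℝ) : lam * |x j| + (u j - x j) * (y - x j) ≤ lam * |y| := by
  have key : ∀ τ : ℝ, 0 ≤ lam * |x j + τ| - lam * |x j| - (u j - x j) * τ + τ ^ 2 / 2 := by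
    intro τ
    have h := hu (Function.update x j (x j + τ))
    simp only [enorm2_sq', norm1, ip, ge_iff_le, Pi.sub_apply] at h
    have h1 : ∑ i, |Function.update x j (x j + τ) i| = ∑ i, |x i| + (|x j + τ| - |x j|) := by
      rw [← sub_eq_iff_eq_add', ← Finset.sum_sub_distrib, Finset.sum_eq_single j]
      · simp
      · intro i _ hi; simp [hi]
      · simp
    have h2 : ∑ i, (Function.update x j (x j + τ) i) ^ 2
        = ∑ i, (x i) ^ 2 + ((x j + τ) ^ 2 - (x j) ^ 2) := by
      rw [← sub_eq_iff_eq_add', ← Finset.sum_sub_distrib, Finset.sum_eq_single j]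
      · simp
      · intro i _ hi; simp [hi]
      · simp
    have h3 : ∑ i, u i * (Function.update x j (x j + τ) i - x i) = u j * τ := by
      rw [Finset.sum_eq_single j]
      · simp
      · intro i _ hi; simp [hi]
      · simp
    rw [h1, h2, h3] at h
    nlinarith
  by_contra hcon
  push Not at hcon
  set τ := y - x j with hτ
  set d := lam * |x j| + (u j - x j) * τ - lam * |y| with hd
  have hd0 : 0 < d := by simp only [hd]; linarith
  have hconv : ∀ ε : ℝ, 0 < ε → ε ≤ 1 → d ≤ ε * τ ^ 2 / 2 := by
    intro ε h0 h1
    have h := key (ε * τ)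
    have habs : |x j + ε * τ| ≤ (1 - ε) * |x j| + ε * |y| := by
      have : x j + ε * τ = (1 - ε) * x j + ε * y := by rw [hτ]; ring
      rw [this]
      refine (abs_add_le _ _).trans ?_
      rw [abs_mul, abs_mul, abs_of_nonneg (by linarith : 0 ≤ 1 - ε), abs_of_pos h0]
    have h5 := mul_le_mul_of_nonneg_left habs hlam.le
    have : ε * d ≤ ε * (ε * τ ^ 2 / 2) := by rw [hd]; nlinarith
    exact le_of_mul_le_mul_left this h0
  have hτ2 : 0 ≤ τ ^ 2 := sq_nonneg _
  have h1 := hconv (min 1 (d / (τ ^ 2 + 1))) (by positivity) (min_le_left _ _)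
  have h2 : min 1 (d / (τ ^ 2 + 1)) * τ ^ 2 ≤ d / (τ ^ 2 + 1) * τ ^ 2 :=
    mul_le_mul_of_nonneg_right (min_le_right _ _) hτ2
  have h3 : d / (τ ^ 2 + 1) * τ ^ 2 ≤ d := by
    rw [div_mul_eq_mul_div, div_le_iff₀ (by positivity)]; nlinarith
  linarith

lemma subdiff_abs_le {n : ℕ} (lam : ℝ) (hlam : 0 < lam) (x u : Fin n → ℝ)
    (hu : u ∈ subdiff (fun x : Fin n → ℝ => lam * norm1 x + (1 / 2) * enorm2 x ^ 2) x)
    (j : Fin n) : |u j - x j| ≤ lam := by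
  have h1 := subdiff_scalar lam hlam x u hu j (x j + 1)
  have h2 := subdiff_scalar lam hlam x u hu j (x j - 1)
  have a1 : |x j + 1| ≤ |x j| + 1 := by simpa using abs_add_le (x j) 1
  have a2 : |x j - 1| ≤ |x j| + 1 := by simpa using abs_sub (x j) 1
  rw [abs_le]
  constructor <;> nlinarith

lemma breg_eq {n : ℕ} (lam : ℝ) (x u y : Fin n → ℝ) :
    breg (fun x : Fin n → ℝ => lam * norm1 x + (1 / 2) * enorm2 x ^ 2) u x y =
      ∑ j, (lam * |y j| - lam * |x j| - (u j - x j) * (y j - x j)) +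
        (1 / 2) * ∑ j, (y j - x j) ^ 2 := by
  simp only [breg, enorm2_sq', norm1, ip, Finset.mul_sum, ← Finset.sum_add_distrib,
    ← Finset.sum_sub_distrib, Pi.sub_apply]
  apply Finset.sum_congr rfl
  intro i _
  ring

lemma breg_lower {n : ℕ} (lam : ℝ) (hlam : 0 < lam) (x u : Fin n → ℝ)
    (hu : u ∈ subdiff (fun x : Fin n → ℝ => lam * norm1 x + (1 / 2) * enorm2 x ^ 2) x)
    (y : Fin n → ℝ) : (1 / 2) * ∑ j, (y j - x j) ^ 2 ≤
      breg (fun x : Fin n → ℝ => lam * norm1 x + (1 / 2) * enorm2 x ^ 2) u x y := by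
  rw [breg_eq]
  have : 0 ≤ ∑ j, (lam * |y j| - lam * |x j| - (u j - x j) * (y j - x j)) :=
    Finset.sum_nonneg fun j _ => by linarith [subdiff_scalar lam hlam x u hu j (y j)]
  linarith

lemma xminOf_le {n : ℕ} (y : Fin n → ℝ) (j : Fin n) (hj : y j ≠ 0) : xminOf y ≤ |y j| :=
  csInf_le ⟨0, by rintro r ⟨j, _, rfl⟩; exact abs_nonneg _⟩ ⟨j, hj, rfl⟩

lemma xminOf_pos {n : ℕ} (y : Fin n → ℝ) (hy : y ≠ 0) : 0 < xminOf y := by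
  obtain ⟨j, hj⟩ := Function.ne_iff.mp hy
  have hfin : {r | ∃ j, y j ≠ 0 ∧ r = |y j|}.Finite := by
    apply (Set.finite_range (fun j => |y j|)).subset
    rintro r ⟨j, _, rfl⟩
    exact ⟨j, rfl⟩
  have hne : {r | ∃ j, y j ≠ 0 ∧ r = |y j|}.Nonempty := ⟨_, j, hj, rfl⟩
  obtain ⟨k, hk, h⟩ := hne.csInf_mem hfin
  unfold xminOf
  rw [h]
  exact abs_pos.mpr hk

lemma breg_upper {n : ℕ} (lam : ℝ) (hlam : 0 < lam) (x u : Fin n → ℝ)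
    (hu : u ∈ subdiff (fun x : Fin n → ℝ => lam * norm1 x + (1 / 2) * enorm2 x ^ 2) x)
    (y : Fin n → ℝ) (hy : y ≠ 0) :
    xminOf y / (xminOf y + 2 * lam) *
      breg (fun x : Fin n → ℝ => lam * norm1 x + (1 / 2) * enorm2 x ^ 2) u x y ≤
      ∑ j, (x j - y j) ^ 2 := by
  have hp := xminOf_pos y hy
  rw [breg_eq, div_mul_eq_mul_div, div_le_iff₀ (by positivity)]
  have hj : ∀ j, xminOf y * (lam * |y j| - lam * |x j| - (u j - x j) * (y j - x j)) ≤
      2 * lam * (x j - y j) ^ 2 := by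
    intro j
    have h0 := subdiff_scalar lam hlam x u hu j 0
    have h2 := subdiff_scalar lam hlam x u hu j (2 * x j)
    rw [abs_mul, abs_two] at h2
    rw [abs_zero] at h0
    have hvx : (u j - x j) * x j = lam * |x j| := by nlinarith
    have hv := subdiff_abs_le lam hlam x u hu j
    have hE : lam * |y j| - lam * |x j| - (u j - x j) * (y j - x j)
        = lam * |y j| - (u j - x j) * y j := by linarith
    rw [hE]
    have hr : 0 ≤ 2 * lam * (x j - y j) ^ 2 := by positivity
    by_cases hy0 : y j = 0
    · simp only [hy0, abs_zero, mul_zero, sub_zero] at hr ⊢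
      exact hr
    have hm := xminOf_le y j hy0
    by_cases hs : 0 < x j * y j
    · have : (u j - x j) * y j = lam * |y j| := by
        rcases pos_and_pos_or_neg_and_neg_of_mul_pos hs with ⟨a, b⟩ | ⟨a, b⟩
        · rw [abs_of_pos a] at hvx
          rw [abs_of_pos b, mul_right_cancel₀ a.ne' hvx]
        · rw [abs_of_neg a] at hvx
          have : u j - x j = -lam := mul_right_cancel₀ a.ne (by linarith)
          rw [abs_of_neg b, this]; ring
      rw [this]; simpa using hr
    · push Not at hs
      have h1 : lam * |y j| - (u j - x j) * y j ≤ 2 * lam * |y j| := by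
        have : -((u j - x j) * y j) ≤ |u j - x j| * |y j| := by
          rw [← abs_mul]; exact neg_le_abs _
        nlinarith [mul_le_mul_of_nonneg_right hv (abs_nonneg (y j))]
      have h3 : xminOf y * |y j| ≤ (y j) ^ 2 := by
        rw [← sq_abs]; nlinarith [abs_nonneg (y j)]
      have h4 : (y j) ^ 2 ≤ (x j - y j) ^ 2 := by nlinarith [sq_nonneg (x j)]
      calc _ ≤ xminOf y * (2 * lam * |y j|) := mul_le_mul_of_nonneg_left h1 hp.le
        _ = 2 * lam * (xminOf y * |y j|) := by ring
        _ ≤ _ := by gcongr; exact h3.trans h4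
  have hsum := Finset.sum_le_sum fun j (_ : j ∈ Finset.univ) => hj j
  rw [← Finset.mul_sum, ← Finset.mul_sum] at hsum
  have hsw : ∑ j, (y j - x j) ^ 2 = ∑ j, (x j - y j) ^ 2 :=
    Finset.sum_congr rfl fun j _ => by ring
  rw [hsw]
  have hE : 0 ≤ ∑ j, (x j - y j) ^ 2 := Finset.sum_nonneg fun j _ => sq_nonneg _
  nlinarith [mul_nonneg hp.le hE]

lemma fconj_eq {n : ℕ} (f : (Fin n → ℝ) → ℝ) (x u : Fin n → ℝ) (hu : u ∈ subdiff f x) :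
    fconj f u = ip u x - f x := by
  have hle : ∀ z, ip u z - f z ≤ ip u x - f x := by
    intro z
    have h := hu z
    have : ip u (z - x) = ip u z - ip u x := by
      simp [ip, mul_sub, Finset.sum_sub_distrib]
    rw [this] at h; linarith
  apply le_antisymm
  · exact ciSup_le hle
  · exact le_ciSup (f := fun z => ip u z - f z) ⟨_, by rintro _ ⟨z, rfl⟩; exact hle z⟩ x

lemma fconj_smooth {n : ℕ} (lam : ℝ) (hlam : 0 < lam) (x u a : Fin n → ℝ)
    (hu : u ∈ subdiff (fun x : Fin n → ℝ => lam * norm1 x + (1 / 2) * enorm2 x ^ 2) x)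
    (ha : ∑ j, (a j) ^ 2 = 1) (s : ℝ) :
    fconj (fun x : Fin n → ℝ => lam * norm1 x + (1 / 2) * enorm2 x ^ 2) (u - s • a) ≤
      fconj (fun x : Fin n → ℝ => lam * norm1 x + (1 / 2) * enorm2 x ^ 2) u
        - s * ip a x + s ^ 2 / 2 := by
  rw [fconj_eq _ x u hu]
  apply ciSup_le
  intro z
  have h := breg_lower lam hlam x u hu z
  unfold breg at h
  set f := (fun x : Fin n → ℝ => lam * norm1 x + (1 / 2) * enorm2 x ^ 2)
  have h1 : ip u (z - x) = ip u z - ip u x := by simp [ip, mul_sub, Finset.sum_sub_distrib]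
  have h2 : ip (u - s • a) z = ip u z - s * ip a z := by
    simp [ip, sub_mul, Finset.sum_sub_distrib, Finset.mul_sum, mul_assoc]
  have h3 : 0 ≤ ∑ j, (z j - x j + s * a j) ^ 2 := Finset.sum_nonneg fun j _ => sq_nonneg _
  have h4 : ∑ j, (z j - x j + s * a j) ^ 2
      = ∑ j, (z j - x j) ^ 2 + 2 * s * (ip a z - ip a x) + s ^ 2 * ∑ j, (a j) ^ 2 := by
    simp only [ip, ← Finset.sum_sub_distrib, Finset.mul_sum, ← Finset.sum_add_distrib]
    exact Finset.sum_congr rfl fun j _ => by ring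
  rw [ha] at h4
  change ip (u - s • a) z - f z ≤ ip u x - f x - s * ip a x + s ^ 2 / 2
  rw [h2]
  linarith

/-- One exact step. -/
lemma step_bound {n : ℕ} (lam : ℝ) (hlam : 0 < lam) (x u a y : Fin n → ℝ)
    (hu : u ∈ subdiff (fun x : Fin n → ℝ => lam * norm1 x + (1 / 2) * enorm2 x ^ 2) x)
    (ha : ∑ j, (a j) ^ 2 = 1) (b c t : ℝ) (hb : b = ip a y + c)
    (ht : ∀ s : ℝ,
      fconj (fun x : Fin n → ℝ => lam * norm1 x + (1 / 2) * enorm2 x ^ 2) (u - t • a) + t * b ≤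
      fconj (fun x : Fin n → ℝ => lam * norm1 x + (1 / 2) * enorm2 x ^ 2) (u - s • a) + s * b)
    (x' : Fin n → ℝ)
    (hx' : u - t • a ∈ subdiff
      (fun x : Fin n → ℝ => lam * norm1 x + (1 / 2) * enorm2 x ^ 2) x') :
    breg (fun x : Fin n → ℝ => lam * norm1 x + (1 / 2) * enorm2 x ^ 2) (u - t • a) x' y ≤
      breg (fun x : Fin n → ℝ => lam * norm1 x + (1 / 2) * enorm2 x ^ 2) u x y
        - (ip a x - b) ^ 2 / 2 - (ip a x - b) * c + 2 * lam * (norm1 a * |c|) := by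
  have hopt : ip a x' = b := by
    have h1 := ht (t + (ip a x' - b))
    have h2 := fconj_smooth lam hlam x' (u - t • a) a hx' ha (ip a x' - b)
    have h3 : u - t • a - (ip a x' - b) • a = u - (t + (ip a x' - b)) • a := by
      rw [add_smul]; abel
    rw [h3] at h2
    have : (ip a x' - b) ^ 2 ≤ 0 := by nlinarith
    have := pow_eq_zero_iff (two_ne_zero) |>.mp (le_antisymm this (sq_nonneg _))
    linarith
  have htr : |t - (ip a x - b)| ≤ 2 * lam * norm1 a := by
    have : t - (ip a x - b) = ∑ j, a j * ((u j - x j) - ((u - t • a) j - x' j)) := by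
      rw [← hopt]
      have : t = t * ∑ j, (a j) ^ 2 := by rw [ha, mul_one]
      conv_lhs => rw [this]
      simp only [ip, Finset.mul_sum, ← Finset.sum_sub_distrib, Pi.sub_apply, Pi.smul_apply,
        smul_eq_mul]
      exact Finset.sum_congr rfl fun j _ => by ring
    rw [this]
    refine (Finset.abs_sum_le_sum_abs _ _).trans ?_
    rw [norm1, Finset.mul_sum]
    apply Finset.sum_le_sum
    intro j _
    rw [abs_mul, mul_comm]
    apply mul_le_mul_of_nonneg_right _ (abs_nonneg _)
    have h1 := subdiff_abs_le lam hlam x u hu j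
    have h2 := subdiff_abs_le lam hlam x' _ hx' j
    have := abs_sub (u j - x j) ((u - t • a) j - x' j)
    linarith
  have hmin := ht (ip a x - b)
  have hsm := fconj_smooth lam hlam x u a hu ha (ip a x - b)
  rw [fconj_eq _ _ _ hx'] at hmin
  rw [fconj_eq _ _ _ hu] at hsm
  have htc : -(t * c) ≤ -((ip a x - b) * c) + 2 * lam * (norm1 a * |c|) := by
    have h1 : -((t - (ip a x - b)) * c) ≤ |t - (ip a x - b)| * |c| := by
      rw [← abs_mul]; exact neg_le_abs _
    have h2 := mul_le_mul_of_nonneg_right htr (abs_nonneg c)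
    nlinarith
  unfold breg
  have h1 : ip u (y - x) = ip u y - ip u x := by simp [ip, mul_sub, Finset.sum_sub_distrib]
  have h2 : ip (u - t • a) (y - x') = ip (u - t • a) y - ip (u - t • a) x' := by
    simp only [ip, mul_sub, Finset.sum_sub_distrib, Pi.sub_apply]
  have h3 : ip (u - t • a) y = ip u y - t * ip a y := by
    simp [ip, sub_mul, Finset.sum_sub_distrib, Finset.mul_sum, mul_assoc]
  rw [h1, h2, h3]
  have h4 : t * b = t * ip a y + t * c := by rw [hb]; ring
  have h5 : (ip a x - b) ^ 2 = (ip a x - b) * ip a x - (ip a x - b) * b := by ring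
  linarith

lemma sigmaMax_bound {m n : ℕ} (A : Matrix (Fin m) (Fin n) ℝ) (hrows : ∀ i, enorm2 (A i) = 1)
    (v : Fin n → ℝ) :
    ∑ i, (A.mulVec v i) ^ 2 ≤ (sigmaMax A) ^ 2 * ∑ j, (v j) ^ 2 := by
  by_cases hv : v = 0
  · subst hv; simp
  have hbdd : BddAbove {r | ∃ x : Fin n → ℝ, x ≠ 0 ∧ r = enorm2 (A.mulVec x) / enorm2 x} := by
    refine ⟨Real.sqrt m, ?_⟩
    rintro r ⟨w, hw, rfl⟩
    have hp := enorm2_pos' w hw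
    rw [div_le_iff₀ hp]
    apply Real.sqrt_le_iff.mpr
    refine ⟨by positivity, ?_⟩
    rw [mul_pow, Real.sq_sqrt (Nat.cast_nonneg m), enorm2_sq']
    calc ∑ i, (A.mulVec w i) ^ 2 ≤ ∑ i : Fin m, ∑ j, (w j) ^ 2 := by
          apply Finset.sum_le_sum
          intro i _
          have := Finset.sum_mul_sq_le_sq_mul_sq Finset.univ (A i) w
          rw [← enorm2_sq' (A i), hrows i] at this
          simpa [Matrix.mulVec, dotProduct] using this
      _ = _ := by simp
  have h := le_csSup hbdd ⟨v, hv, rfl⟩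
  have hp := enorm2_pos' v hv
  rw [div_le_iff₀ hp] at h
  rw [← enorm2_sq', ← enorm2_sq', ← mul_pow]
  exact pow_le_pow_left₀ (enorm2_nonneg' _) h 2

lemma sigmaMin_nonneg' {I J : Type*} [Fintype I] [Fintype J] (M : Matrix I J ℝ) :
    0 ≤ sigmaMin M := by
  apply Real.sInf_nonneg
  rintro r ⟨x, _, rfl⟩
  exact div_nonneg (enorm2_nonneg' _) (enorm2_nonneg' _)

lemma sigmaTilde_bound {m n : ℕ} (A : Matrix (Fin m) (Fin n) ℝ) (k : ℕ) (I : Finset (Fin m))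
    (hI : I.card = k) (v : Fin n → ℝ) :
    (sigmaTildeQBMin A k) ^ 2 * ∑ j, (v j) ^ 2 ≤ ∑ i ∈ I, (A.mulVec v i) ^ 2 := by
  by_cases hv : v = 0
  · subst hv; simp
  obtain ⟨j0, hj0⟩ := Function.ne_iff.mp hv
  have hT0 : 0 ≤ sigmaTildeQBMin A k := by
    apply Real.sInf_nonneg
    rintro r ⟨I, J, _, _, rfl⟩
    exact sigmaMin_nonneg' _
  have h1 : sigmaTildeQBMin A k ≤ sigmaMin (subMat A I Finset.univ) := by
    apply csInf_le
    · refine ⟨0, ?_⟩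
      rintro r ⟨I, J, _, _, rfl⟩
      exact sigmaMin_nonneg' _
    · exact ⟨I, Finset.univ, hI, ⟨j0, Finset.mem_univ _⟩, rfl⟩
  let w : {j // j ∈ (Finset.univ : Finset (Fin n))} → ℝ := fun j => v j
  have hw : w ≠ 0 := by
    intro h
    exact hj0 (congrFun h ⟨j0, Finset.mem_univ _⟩)
  have h2 : sigmaMin (subMat A I Finset.univ)
      ≤ enorm2 ((subMat A I Finset.univ).mulVec w) / enorm2 w := by
    apply csInf_le
    · refine ⟨0, ?_⟩
      rintro r ⟨x, _, rfl⟩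
      exact div_nonneg (enorm2_nonneg' _) (enorm2_nonneg' _)
    · exact ⟨w, hw, rfl⟩
  have h3 := h1.trans h2
  rw [le_div_iff₀ (enorm2_pos' w hw)] at h3
  have h4 := pow_le_pow_left₀ (mul_nonneg hT0 (enorm2_nonneg' _)) h3 2
  rw [mul_pow, enorm2_sq', enorm2_sq'] at h4
  have e1 : ∑ j, (w j) ^ 2 = ∑ j, (v j) ^ 2 := by
    rw [← Finset.sum_coe_sort Finset.univ (fun j => (v j) ^ 2)]
  have e2 : ∑ i, ((subMat A I Finset.univ).mulVec w i) ^ 2 = ∑ i ∈ I, (A.mulVec v i) ^ 2 := by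
    rw [← Finset.sum_coe_sort I (fun i => (A.mulVec v i) ^ 2)]
    apply Finset.sum_congr rfl
    intro i _
    congr 1
    simp only [Matrix.mulVec, dotProduct, subMat, Matrix.submatrix_apply, w]
    exact Finset.sum_coe_sort Finset.univ (fun j => A i j * v j)
  rw [e1, e2] at h4
  exact h4

lemma quantileAt_nonneg {m : ℕ} (k : ℕ) (y : Fin m → ℝ) (hy : ∀ i, 0 ≤ y i) :
    0 ≤ quantileAt k y := by
  unfold quantileAt
  split_ifs with h
  · have h1 : 0 ≤ sortedVal y ⟨k - 1, by omega⟩ := hy _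
    have h2 : 0 ≤ sortedVal y ⟨k, h.2⟩ := hy _
    linarith
  · exact le_rfl

set_option maxHeartbeats 2000000

/-- one-step expectation bound for Quantile-RaSK with exact step in the
corrupted noiseless case, Theorem 3.3(b). -/
theorem stmt13 {m n : ℕ} (lam : ℝ) (hlam : 0 < lam)
    (f : (Fin n → ℝ) → ℝ)
    (hf : f = fun x => lam * norm1 x + (1 / 2) * enorm2 x ^ 2)
    (A : Matrix (Fin m) (Fin n) ℝ)
    (hrank : A.rank = min m n) (hrows : ∀ i, enorm2 (A i) = 1)
    (q β : ℝ) (hβq : β < q) (hq : q < 1 - β)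
    (kq kb kqb : ℕ)
    (hkq : (kq : ℝ) = q * m) (hkb : (kb : ℝ) = β * m) (hkqb : (kqb : ℝ) = (q - β) * m)
    (xhat : Fin n → ℝ) (hAx : A.mulVec xhat ≠ 0)
    (hmin : ∀ z, A.mulVec z = A.mulVec xhat → z ≠ xhat → f xhat < f z)
    (bc : Fin m → ℝ)
    (hbc : (Finset.univ.filter (fun i => bc i ≠ 0)).card = kb)
    (b : Fin m → ℝ) (hb : b = A.mulVec xhat + bc)
    -- condition (3.12)
    (hcond :
      (2 * q / (q - β)) *
          (2 * Real.sqrt β / Real.sqrt (1 - q - β) + β / (1 - q - β)) *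
          ((xminOf xhat + 2 * lam) / xminOf xhat) <
        (sigmaTildeQBMin A kqb) ^ 2 / (sigmaMax A) ^ 2)
    (x xs : Fin n → ℝ) (hxs : xs ∈ subdiff f x)
    (hrange : ∃ u : Fin m → ℝ, xs = A.transpose.mulVec u)
    (Q : ℝ) (hQ : Q = quantileAt kq (fun i => |ip (A i) x - b i|))
    (N2 : Finset (Fin m)) (hN2 : N2 = Finset.univ.filter (fun i => |ip (A i) x - b i| ≤ Q))
    (hN2card : N2.card = kq)
    -- exact-step update
    (t : Fin m → ℝ)
    (ht : ∀ i ∈ N2, ∀ s : ℝ,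
      fconj f (xs - t i • A i) + t i * b i ≤ fconj f (xs - s • A i) + s * b i)
    (xs' x' : Fin m → (Fin n → ℝ))
    (hxs' : ∀ i ∈ N2, xs' i = xs - t i • A i)
    (hx' : ∀ i ∈ N2, xs' i ∈ subdiff f (x' i))
    (C : ℝ)
    (hC : C = ((q - β) / (2 * q ^ 2 * m)) *
          (xminOf xhat / (xminOf xhat + 2 * lam)) * (sigmaTildeQBMin A kqb) ^ 2 -
        (1 / (q * m)) *
          (2 * Real.sqrt β / Real.sqrt (1 - q - β) + β / (1 - q - β)) *
          (sigmaMax A) ^ 2) :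
    (1 / (q * m)) * ∑ i ∈ N2, breg f (xs' i) (x' i) xhat ≤
      (1 - C) * breg f xs x xhat +
        (2 * lam / (q * m)) * enorm2 (b - A.mulVec xhat) * norm12 A := by
  subst hf
  have hxh : xhat ≠ 0 := by
    rintro rfl; exact hAx (Matrix.mulVec_zero A)
  have hm : 0 < (m : ℝ) := by
    rcases Nat.eq_zero_or_pos m with h | h
    · subst h; exact absurd (Subsingleton.elim _ _) hAx
    · exact_mod_cast h
  have hβ0 : 0 ≤ β := by
    have : 0 ≤ β * m := by rw [← hkb]; positivity
    exact nonneg_of_mul_nonneg_left this hm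
  have hq0 : 0 < q := by linarith
  have hqm : 0 < q * m := mul_pos hq0 hm
  have h1qb : 0 < 1 - q - β := by linarith
  have hQ0 : 0 ≤ Q := by rw [hQ]; exact quantileAt_nonneg _ _ fun i => abs_nonneg _
  have ha : ∀ i, ∑ j, (A i j) ^ 2 = 1 := fun i => by
    rw [← enorm2_sq' (A i), hrows i, one_pow]
  have hbi : ∀ i, b i = ip (A i) xhat + bc i := fun i => by rw [hb]; rfl
  set f := (fun x : Fin n → ℝ => lam * norm1 x + (1 / 2) * enorm2 x ^ 2) with hfdef
  set D := breg f xs x xhat with hD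
  set v : Fin n → ℝ := fun j => x j - xhat j with hv
  set e : Fin m → ℝ := A.mulVec v with he
  have hei : ∀ i, e i = ip (A i) x - ip (A i) xhat := by
    intro i
    simp only [he, hv, Matrix.mulVec, dotProduct, ip, mul_sub, Finset.sum_sub_distrib]
  set E := ∑ j, (v j) ^ 2 with hE
  have hE0 : 0 ≤ E := Finset.sum_nonneg fun j _ => sq_nonneg _
  have hDlow : E ≤ 2 * D := by
    have h := breg_lower lam hlam x xs hxs xhat
    have hsw : ∑ j, (xhat j - x j) ^ 2 = E := Finset.sum_congr rfl fun j _ => by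
      simp only [hv]; ring
    rw [hsw] at h
    linarith
  have hDup : xminOf xhat / (xminOf xhat + 2 * lam) * D ≤ E :=
    breg_upper lam hlam x xs hxs xhat hxh
  set S := N2.filter (fun i => bc i ≠ 0) with hS
  set U := N2.filter (fun i => ¬ bc i ≠ 0) with hU
  set K := Finset.univ.filter (fun i => bc i ≠ 0) with hK
  have hSK : S ⊆ K := Finset.filter_subset_filter _ (Finset.subset_univ _)
  have hScard : (S.card : ℝ) ≤ β * m := by
    rw [← hkb, ← hbc]; exact_mod_cast Finset.card_le_card hSK
  have hUS : S.card + U.card = N2.card := Finset.card_filter_add_card_filter_not _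
  have hUcard : kqb ≤ U.card := by
    have : (kqb : ℝ) ≤ U.card := by
      have h : (S.card : ℝ) + U.card = kq := by rw [← hN2card]; exact_mod_cast hUS
      rw [hkq] at h
      rw [hkqb]; linarith
    exact_mod_cast this
  -- main descent term
  obtain ⟨I, hIU, hIcard⟩ := Finset.exists_subset_card_eq hUcard
  have hdesc : (sigmaTildeQBMin A kqb) ^ 2 * E ≤ ∑ i ∈ U, (e i) ^ 2 :=
    (sigmaTilde_bound A kqb I hIcard v).trans
      (Finset.sum_le_sum_of_subset_of_nonneg hIU fun i _ _ => sq_nonneg _)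
  have hmax : ∑ i, (e i) ^ 2 ≤ (sigmaMax A) ^ 2 * E := sigmaMax_bound A hrows v
  set T := (sigmaTildeQBMin A kqb) ^ 2 with hT
  set M := (sigmaMax A) ^ 2 with hM
  have hT0 : 0 ≤ T := sq_nonneg _
  have hM0 : 0 ≤ M := sq_nonneg _
  -- quantile bound
  have hQb : Q ^ 2 * ((1 - q - β) * m) ≤ M * E := by
    have hsub : ∀ i ∈ (N2 ∪ K)ᶜ, Q ^ 2 ≤ (e i) ^ 2 := by
      intro i hi
      simp only [Finset.mem_compl, Finset.mem_union, not_or, hN2, hK, Finset.mem_filter,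
        Finset.mem_univ, true_and, not_not, not_le] at hi
      obtain ⟨h1, h2⟩ := hi
      have : ip (A i) x - b i = e i := by rw [hbi, h2, hei]; ring
      rw [this] at h1
      rw [← sq_abs (e i)]
      exact pow_le_pow_left₀ hQ0 h1.le 2
    have hc : ((1 - q - β) * m : ℝ) ≤ ((N2 ∪ K)ᶜ.card : ℝ) := by
      have h1 := Finset.card_union_le N2 K
      have h2 : (N2 ∪ K)ᶜ.card + (N2 ∪ K).card = m := by
        rw [Finset.card_compl_add_card]; simp
      have h3 : m ≤ (N2 ∪ K)ᶜ.card + (kq + kb) := by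
        rw [hN2card, hbc] at h1; omega
      have h4 : (m : ℝ) ≤ ((N2 ∪ K)ᶜ.card : ℝ) + (kq + kb) := by exact_mod_cast h3
      rw [hkq, hkb] at h4
      linarith
    calc Q ^ 2 * ((1 - q - β) * m) ≤ Q ^ 2 * ((N2 ∪ K)ᶜ.card : ℝ) := by gcongr
      _ = ∑ i ∈ (N2 ∪ K)ᶜ, Q ^ 2 := by rw [Finset.sum_const, nsmul_eq_mul, mul_comm]
      _ ≤ ∑ i ∈ (N2 ∪ K)ᶜ, (e i) ^ 2 := Finset.sum_le_sum hsub
      _ ≤ ∑ i, (e i) ^ 2 := Finset.sum_le_sum_of_subset_of_nonneg (Finset.subset_univ _)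
          fun i _ _ => sq_nonneg _
      _ ≤ _ := hmax
  set P := Real.sqrt β / Real.sqrt (1 - q - β) with hP
  set R := β / (1 - q - β) with hR
  have hP0 : 0 ≤ P := by positivity
  have hR0 : 0 ≤ R := by positivity
  have hPR : P ^ 2 = R := by rw [hP, div_pow, Real.sq_sqrt hβ0, Real.sq_sqrt h1qb.le]
  have hQ2 : Q ^ 2 * (β * m) ≤ R * (M * E) := by
    have : Q ^ 2 * (β * m) = R * (Q ^ 2 * ((1 - q - β) * m)) := by
      rw [hR]; field_simp
    rw [this]
    exact mul_le_mul_of_nonneg_left hQb hR0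
  have hSe : Q * ∑ i ∈ S, |e i| ≤ P * (M * E) := by
    refine (abs_le_of_sq_le_sq' ?_ (by positivity)).2
    have h1 : (∑ i ∈ S, |e i|) ^ 2 ≤ (β * m) * (M * E) := by
      calc (∑ i ∈ S, |e i|) ^ 2 ≤ S.card * ∑ i ∈ S, |e i| ^ 2 := sq_sum_le_card_mul_sum_sq
        _ ≤ (β * m) * (M * E) := by
          apply mul_le_mul hScard _ (Finset.sum_nonneg fun i _ => sq_nonneg _) (by positivity)
          simp only [sq_abs]
          exact (Finset.sum_le_sum_of_subset_of_nonneg (Finset.subset_univ _)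
            fun i _ _ => sq_nonneg _).trans hmax
    calc (Q * ∑ i ∈ S, |e i|) ^ 2 = Q ^ 2 * (∑ i ∈ S, |e i|) ^ 2 := by ring
      _ ≤ Q ^ 2 * ((β * m) * (M * E)) := by gcongr
      _ = (Q ^ 2 * (β * m)) * (M * E) := by ring
      _ ≤ (R * (M * E)) * (M * E) := by gcongr
      _ = (P * (M * E)) ^ 2 := by rw [← hPR]; ring
  -- single steps
  have hstep : ∀ i ∈ N2, breg f (xs' i) (x' i) xhat ≤
      D - (ip (A i) x - b i) ^ 2 / 2 - (ip (A i) x - b i) * bc i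
        + 2 * lam * (norm1 (A i) * |bc i|) := by
    intro i hi
    have h1 := hx' i hi
    rw [hxs' i hi] at h1 ⊢
    exact step_bound lam hlam x xs (A i) xhat hxs (ha i) (b i) (bc i) (t i) (hbi i)
      (ht i hi) (x' i) h1
  have hsumU : ∑ i ∈ U, (-(ip (A i) x - b i) ^ 2 / 2 - (ip (A i) x - b i) * bc i)
      ≤ -(T * E) / 2 := by
    have : ∀ i ∈ U, (-(ip (A i) x - b i) ^ 2 / 2 - (ip (A i) x - b i) * bc i)
        = (-1 / 2) * (e i) ^ 2 := by
      intro i hi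
      have hb0 : bc i = 0 := not_not.mp (Finset.mem_filter.mp hi).2
      rw [hbi, hei, hb0]; ring
    rw [Finset.sum_congr rfl this, ← Finset.mul_sum]
    linarith
  have hsumS : ∑ i ∈ S, (-(ip (A i) x - b i) ^ 2 / 2 - (ip (A i) x - b i) * bc i)
      ≤ (2 * P + R) * M * D := by
    have h1 : ∀ i ∈ S, (-(ip (A i) x - b i) ^ 2 / 2 - (ip (A i) x - b i) * bc i)
        ≤ Q ^ 2 / 2 + Q * |e i| := by
      intro i hi
      have hiN := (Finset.mem_filter.mp hi).1
      rw [hN2] at hiN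
      have hr : |ip (A i) x - b i| ≤ Q := (Finset.mem_filter.mp hiN).2
      have hc : bc i = e i - (ip (A i) x - b i) := by rw [hbi, hei]; ring
      rw [hc]
      have h2 : (ip (A i) x - b i) ^ 2 ≤ Q ^ 2 := by
        rw [← sq_abs]; exact pow_le_pow_left₀ (abs_nonneg _) hr 2
      have h3 : -((ip (A i) x - b i) * e i) ≤ |ip (A i) x - b i| * |e i| := by
        rw [← abs_mul]; exact neg_le_abs _
      have h4 := mul_le_mul_of_nonneg_right hr (abs_nonneg (e i))
      have h5 : -(ip (A i) x - b i) ^ 2 / 2 - (ip (A i) x - b i) * (e i - (ip (A i) x - b i))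
          = (ip (A i) x - b i) ^ 2 / 2 + -((ip (A i) x - b i) * e i) := by ring
      rw [h5]
      exact add_le_add (by linarith only [h2]) (h3.trans h4)
    have h2 := Finset.sum_le_sum h1
    rw [Finset.sum_add_distrib, Finset.sum_const, nsmul_eq_mul, ← Finset.mul_sum] at h2
    have h3 : (S.card : ℝ) * (Q ^ 2 / 2) ≤ (β * m) * (Q ^ 2 / 2) := by gcongr
    have h4 : (P + R / 2) * M * E ≤ (P + R / 2) * M * (2 * D) :=
      mul_le_mul_of_nonneg_left hDlow (by positivity)
    linarith
  have hnorm : ∑ i ∈ N2, norm1 (A i) * |bc i| ≤ enorm2 (b - A.mulVec xhat) * norm12 A := by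
    have hbb : b - A.mulVec xhat = bc := by rw [hb]; simp
    rw [hbb]
    have hn1 : ∀ i, 0 ≤ norm1 (A i) := fun i => Finset.sum_nonneg fun j _ => abs_nonneg _
    calc ∑ i ∈ N2, norm1 (A i) * |bc i| ≤ ∑ i, norm1 (A i) * |bc i| :=
          Finset.sum_le_sum_of_subset_of_nonneg (Finset.subset_univ _)
            fun i _ _ => mul_nonneg (hn1 i) (abs_nonneg _)
      _ ≤ Real.sqrt (∑ i, (norm1 (A i)) ^ 2) * Real.sqrt (∑ i, |bc i| ^ 2) :=
          Real.sum_mul_le_sqrt_mul_sqrt _ _ _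
      _ = _ := by simp only [sq_abs]; rw [mul_comm]; rfl
  have htot : ∑ i ∈ N2, breg f (xs' i) (x' i) xhat ≤
      q * m * D + (-(T * E) / 2 + (2 * P + R) * M * D)
        + 2 * lam * (enorm2 (b - A.mulVec xhat) * norm12 A) := by
    refine (Finset.sum_le_sum hstep).trans ?_
    have hre : ∀ i ∈ N2, D - (ip (A i) x - b i) ^ 2 / 2 - (ip (A i) x - b i) * bc i
        + 2 * lam * (norm1 (A i) * |bc i|) =
        D + (-(ip (A i) x - b i) ^ 2 / 2 - (ip (A i) x - b i) * bc i)
        + 2 * lam * (norm1 (A i) * |bc i|) := fun i _ => by ring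
    rw [Finset.sum_congr rfl hre, Finset.sum_add_distrib, Finset.sum_add_distrib,
      Finset.sum_const, nsmul_eq_mul, hN2card, hkq, ← Finset.mul_sum,
      ← Finset.sum_filter_add_sum_filter_not N2 (fun i => bc i ≠ 0)
        (fun i => (-(ip (A i) x - b i) ^ 2 / 2 - (ip (A i) x - b i) * bc i))]
    have := mul_le_mul_of_nonneg_left hnorm (by positivity : 0 ≤ 2 * lam)
    linarith
  set X := xminOf xhat / (xminOf xhat + 2 * lam) with hX
  have hX0 : 0 ≤ X := by have := xminOf_pos xhat hxh; positivity
  have hD0 : 0 ≤ D := by linarith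
  have hmain : (q - β) / q * X * T * D ≤ T * E := by
    have h1 : (q - β) / q ≤ 1 := by rw [div_le_one hq0]; linarith
    calc (q - β) / q * X * T * D = (q - β) / q * (T * (X * D)) := by ring
      _ ≤ 1 * (T * (X * D)) := by gcongr
      _ ≤ T * E := by rw [one_mul]; gcongr
  have hPP : 2 * Real.sqrt β / Real.sqrt (1 - q - β) = 2 * P := by rw [hP]; ring
  rw [hC, hPP]
  calc 1 / (q * m) * ∑ i ∈ N2, breg f (xs' i) (x' i) xhat
      ≤ 1 / (q * m) * (q * m * D + (-((q - β) / q * X * T * D) / 2 + (2 * P + R) * M * D)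
        + 2 * lam * (enorm2 (b - A.mulVec xhat) * norm12 A)) := by
        apply mul_le_mul_of_nonneg_left _ (by positivity)
        linarith
    _ = _ := by
        field_simp
        ring
end

section
/- Three-point property of Bregman proximal steps (Lemma 4.1): let f : ℝ^n → ℝ be convex, let Φ : ℝ^n → ℝ ∪ {+∞} be convex with dom(Φ) ≠ ∅, let 𝒳 ⊆ dom(Φ) be nonempty and convex, let x₀ ∈ ℝ^n, x₀* ∈ ∂f(x₀), and suppose x₁ ∈ argmin_{x ∈ 𝒳} {Φ(x) + D_f^{x₀*}(x₀, x)}. Then there exists x₁* ∈ ∂f(x₁) such that for every y ∈ 𝒳: Φ(y) + D_f^{x₀*}(x₀, y) ≥ Φ(x₁) + D_f^{x₀*}(x₀, x₁) + D_f^{x₁*}(x₁, y). -/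
lemma ip_sub_right {n : ℕ} (g a b : Fin n → ℝ) : ip g (a - b) = ip g a - ip g b := by
  simp [ip, mul_sub, Finset.sum_sub_distrib]

lemma ip_comb {n : ℕ} (g x y : Fin n → ℝ) (a b : ℝ) :
    ip g (a • x + b • y) = a * ip g x + b * ip g y := by
  simp only [ip, Finset.mul_sum, ← Finset.sum_add_distrib, Pi.add_apply, Pi.smul_apply,
    smul_eq_mul]
  exact Finset.sum_congr rfl fun i _ => by ring

lemma linear_rep {n : ℕ} (l : (Fin n → ℝ) →ₗ[ℝ] ℝ) : ∃ g : Fin n → ℝ, ∀ z, l z = ip g z := by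
  refine ⟨fun i => l (Pi.single i 1), fun z => ?_⟩
  rw [LinearMap.pi_apply_eq_sum_univ l z]
  refine Finset.sum_congr rfl fun i _ => ?_
  rw [smul_eq_mul, mul_comm]
  congr 2
  ext j
  simp [Pi.single_apply, eq_comm]

/-- Lemma 4.1, three-point property of Bregman proximal steps. -/
theorem stmt14 {n : ℕ} (f : (Fin n → ℝ) → ℝ) (hf : ConvexOn ℝ Set.univ f)
    (X : Set (Fin n → ℝ)) (hXne : X.Nonempty) (hXconv : Convex ℝ X)
    (Φ : (Fin n → ℝ) → ℝ) (hΦ : ConvexOn ℝ X Φ)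
    (x0 x0s : Fin n → ℝ) (hx0s : x0s ∈ subdiff f x0)
    (x1 : Fin n → ℝ) (hx1 : x1 ∈ X)
    (hmin : ∀ x ∈ X, Φ x1 + breg f x0s x0 x1 ≤ Φ x + breg f x0s x0 x) :
    ∃ x1s ∈ subdiff f x1, ∀ y ∈ X,
      Φ y + breg f x0s x0 y ≥
        Φ x1 + breg f x0s x0 x1 + breg f x1s x1 y := by
  have hcont : Continuous f := by
    rw [← continuousOn_univ]
    exact hf.continuousOn isOpen_univ
  set m : ℝ := f x1 + (Φ x1 - ip x0s x1) with hm
  have hmin' : ∀ y ∈ X, m ≤ f y + (Φ y - ip x0s y) := by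
    intro y hy
    have := hmin y hy
    simp only [breg, ip_sub_right] at this
    linarith
  let s : Set ((Fin n → ℝ) × ℝ) := {p | f p.1 < p.2}
  let t : Set ((Fin n → ℝ) × ℝ) := {p | p.1 ∈ X ∧ p.2 ≤ m - (Φ p.1 - ip x0s p.1)}
  have hs1 : Convex ℝ s := by
    have := hf.convex_strict_epigraph
    simpa [s] using this
  have hs2 : IsOpen s := isOpen_lt (hcont.comp continuous_fst) continuous_snd
  have ht : Convex ℝ t := by
    rintro ⟨p, r⟩ ⟨hp, hr⟩ ⟨q, r'⟩ ⟨hq, hr'⟩ a b ha hb hab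
    refine ⟨hXconv hp hq ha hb hab, ?_⟩
    have h1 := hΦ.2 hp hq ha hb hab
    simp only [smul_eq_mul] at h1
    simp only [Prod.smul_mk, Prod.mk_add_mk, smul_eq_mul, ip_comb] at hr hr' ⊢
    have h2 := mul_le_mul_of_nonneg_left hr ha
    have h3 := mul_le_mul_of_nonneg_left hr' hb
    have h4 : a * m + b * m = m := by rw [← add_mul, hab, one_mul]
    linarith
  have hdisj : Disjoint s t := by
    rw [Set.disjoint_left]
    rintro ⟨p, r⟩ hp ⟨hq, hr⟩
    have hp' : f p < r := hp
    have := hmin' p hq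
    dsimp only at hr
    linarith
  obtain ⟨L, u, hLs, hLt⟩ := geometric_hahn_banach_open hs1 hs2 ht hdisj
  obtain ⟨l, hl⟩ := linear_rep (L.toLinearMap.comp (LinearMap.inl ℝ (Fin n → ℝ) ℝ))
  set c : ℝ := L (0, 1) with hc
  have hL : ∀ z r, L (z, r) = ip l z + c * r := by
    intro z r
    have h1 : ((z, r) : (Fin n → ℝ) × ℝ) = (z, 0) + r • (0, 1) := by simp
    have h2 := hl z
    simp only [LinearMap.comp_apply, LinearMap.inl_apply] at h2
    rw [h1, map_add, map_smul, smul_eq_mul, mul_comm r, ← hc]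
    congr 1
  have hS : ∀ z ε, 0 < ε → ip l z + c * (f z + ε) < u := by
    intro z ε hε
    rw [← hL]
    exact hLs _ (show f z < f z + ε by linarith)
  have hT : ∀ y ∈ X, u ≤ ip l y + c * (m - (Φ y - ip x0s y)) := by
    intro y hy
    rw [← hL]
    exact hLt _ ⟨hy, le_rfl⟩
  have hc0 : c < 0 := by
    have h1 := hS x1 1 one_pos
    have h2 := hT x1 hx1
    have h3 : m - (Φ x1 - ip x0s x1) = f x1 := by rw [hm]; ring
    rw [h3] at h2
    linarith
  have hS' : ∀ z, ip l z + c * f z ≤ u := by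
    intro z
    refine le_of_forall_pos_lt_add fun δ hδ => ?_
    have h := hS z (δ / (-c)) (div_pos hδ (by linarith))
    have h2 : c * (δ / (-c)) = -δ := by
      have hcne : c ≠ 0 := hc0.ne
      field_simp
    rw [mul_add, h2] at h
    linarith
  have hg : ∀ z, ip (fun i => (-c)⁻¹ * l i) z = (-c)⁻¹ * ip l z := by
    intro z
    simp only [ip, Finset.mul_sum, mul_assoc]
  have hcp : 0 < (-c)⁻¹ := inv_pos.2 (by linarith)
  have hcc : (-c)⁻¹ * c = -1 := by
    have hcne : c ≠ 0 := hc0.ne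
    field_simp
  have key : ∀ z, ∀ y ∈ X, ip (fun i => (-c)⁻¹ * l i) z - f z ≤
      ip (fun i => (-c)⁻¹ * l i) y - (m - (Φ y - ip x0s y)) := by
    intro z y hy
    have h := mul_le_mul_of_nonneg_left ((hS' z).trans (hT y hy)) hcp.le
    rw [mul_add, mul_add, ← mul_assoc, ← mul_assoc, hcc] at h
    rw [hg, hg]
    linarith
  refine ⟨fun i => (-c)⁻¹ * l i, fun z => ?_, fun y hy => ?_⟩
  · have := key z x1 hx1
    rw [ip_sub_right]
    linarith
  · have := key x1 y hy
    simp only [breg, ip_sub_right]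
    linarith
end
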